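/- The graphs K₇, K₅ ∪ K₂, K₄ ∪ K₃, K₃ ∪ K₂ ∪ K₂, C₇, and C₅ ∪ K₂ are pairwise locally equienergetic: e(K₇) = e(K₅ ∪ K₂) = e(K₄ ∪ K₃) = e(K₃ ∪ K₂ ∪ K₂) = e(C₇) = e(C₅ ∪ K₂). -/

import Mathlib

open SimpleGraph Matrix Finset

noncomputable section

/-- The adjacency matrix of a simple graph over `ℝ` is Hermitian. -/
lemma adjMatrix_isHermitian {V : Type*} [Fintype V] (G : SimpleGraph V)
    [DecidableRel G.Adj] : (G.adjMatrix ℝ).IsHermitian := by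
  rw [Matrix.IsHermitian, Matrix.conjTranspose_eq_transpose_of_trivial]
  exact G.isSymm_adjMatrix

/-- The energy of a finite simple graph: the sum of the absolute values of the
eigenvalues of its adjacency matrix. -/
def graphEnergy {V : Type*} [Fintype V] [DecidableEq V] (G : SimpleGraph V) : ℝ :=
  letI := Classical.decRel G.Adj
  ∑ i, |(adjMatrix_isHermitian G).eigenvalues i|

/-- The local energy of `G` at a vertex `v`: the energy of `G` minus the energy of the
induced subgraph obtained by deleting `v`. -/
def localEnergyAt {V : Type*} [Fintype V] [DecidableEq V] (G : SimpleGraph V) (v : V) : ℝ :=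
  graphEnergy G - graphEnergy (G.induce {u | u ≠ v})

/-- The local energy of `G`: the sum of the local energies at all vertices. -/
def localEnergy {V : Type*} [Fintype V] [DecidableEq V] (G : SimpleGraph V) : ℝ :=
  ∑ v, localEnergyAt G v

end


open Polynomial in
/-- Sum of the absolute values of the real roots of a polynomial. -/
noncomputable def absRoots (p : ℝ[X]) : ℝ := (p.roots.map (fun x => |x|)).sum

open Polynomial in
lemma absRoots_mul {p q : ℝ[X]} (hp : p.Monic) (hq : q.Monic) :
    absRoots (p * q) = absRoots p + absRoots q := by
  unfold absRoots
  rw [roots_mul (mul_ne_zero hp.ne_zero hq.ne_zero), Multiset.map_add, Multiset.sum_add]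

open Polynomial in
lemma absRoots_neg_comp (p : ℝ[X]) : absRoots (-(p.comp (-X))) = absRoots p := by
  unfold absRoots
  rw [roots_neg, roots_comp_neg_X, Multiset.map_map]
  simp

open Polynomial in
lemma absRoots_comp (p : ℝ[X]) : absRoots (p.comp (-X)) = absRoots p := by
  unfold absRoots
  rw [roots_comp_neg_X, Multiset.map_map]
  simp

lemma graphEnergy_eq {V : Type*} [Fintype V] [DecidableEq V] (G : SimpleGraph V)
    [h : DecidableRel G.Adj] : graphEnergy G = absRoots (G.adjMatrix ℝ).charpoly := by
  have : h = Classical.decRel G.Adj := Subsingleton.elim _ _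
  subst this
  unfold graphEnergy absRoots
  rw [(@adjMatrix_isHermitian V _ G (Classical.decRel G.Adj)).roots_charpoly_eq_eigenvalues,
    Multiset.map_map]
  rfl

lemma graphEnergy_iso {V W : Type*} [Fintype V] [DecidableEq V] [Fintype W] [DecidableEq W]
    {G : SimpleGraph V} {H : SimpleGraph W} (e : G ≃g H) : graphEnergy G = graphEnergy H := by
  classical
  rw [graphEnergy_eq, graphEnergy_eq, ← Matrix.charpoly_reindex e.toEquiv (G.adjMatrix ℝ)]
  congr 2
  ext i j
  have := e.symm.map_adj_iff (v := i) (w := j)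
  simp only [Matrix.reindex_apply, Matrix.submatrix_apply, SimpleGraph.adjMatrix_apply]
  exact if_congr this rfl rfl

lemma graphEnergy_sum {V W : Type*} [Fintype V] [DecidableEq V] [Fintype W] [DecidableEq W]
    (G : SimpleGraph V) (H : SimpleGraph W) :
    graphEnergy (G ⊕g H) = graphEnergy G + graphEnergy H := by
  classical
  rw [graphEnergy_eq, graphEnergy_eq, graphEnergy_eq,
    ← absRoots_mul (Matrix.charpoly_monic _) (Matrix.charpoly_monic _),
    ← Matrix.charpoly_fromBlocks_zero₁₂ (G.adjMatrix ℝ) 0 (H.adjMatrix ℝ)]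
  congr 2
  ext (i | i) (j | j) <;> simp [SimpleGraph.adjMatrix_apply]

/-- Deleting a left vertex from a disjoint union. -/
def deleteInl {V W : Type*} (G : SimpleGraph V) (H : SimpleGraph W) (v : V) :
    (G ⊕g H).induce {u | u ≠ Sum.inl v} ≃g (G.induce {u | u ≠ v}) ⊕g H where
  toFun
    | ⟨Sum.inl a, h⟩ => Sum.inl ⟨a, fun e => h (congrArg Sum.inl e)⟩
    | ⟨Sum.inr b, _⟩ => Sum.inr b
  invFun
    | Sum.inl a => ⟨Sum.inl a.1, fun e => a.2 (Sum.inl.inj e)⟩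
    | Sum.inr b => ⟨Sum.inr b, fun e => by cases e⟩
  left_inv := by rintro ⟨a | b, h⟩ <;> rfl
  right_inv := by rintro (a | b) <;> rfl
  map_rel_iff' := by rintro ⟨a | b, h⟩ ⟨c | d, h'⟩ <;> rfl

/-- Deleting a right vertex from a disjoint union. -/
def deleteInr {V W : Type*} (G : SimpleGraph V) (H : SimpleGraph W) (v : W) :
    (G ⊕g H).induce {u | u ≠ Sum.inr v} ≃g G ⊕g (H.induce {u | u ≠ v}) where
  toFun
    | ⟨Sum.inr a, h⟩ => Sum.inr ⟨a, fun e => h (congrArg Sum.inr e)⟩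
    | ⟨Sum.inl b, _⟩ => Sum.inl b
  invFun
    | Sum.inr a => ⟨Sum.inr a.1, fun e => a.2 (Sum.inr.inj e)⟩
    | Sum.inl b => ⟨Sum.inl b, fun e => by cases e⟩
  left_inv := by rintro ⟨a | b, h⟩ <;> rfl
  right_inv := by rintro (a | b) <;> rfl
  map_rel_iff' := by rintro ⟨a | b, h⟩ ⟨c | d, h'⟩ <;> rfl

lemma localEnergy_sum {V W : Type*} [Fintype V] [DecidableEq V] [Fintype W] [DecidableEq W]
    (G : SimpleGraph V) (H : SimpleGraph W) :
    localEnergy (G ⊕g H) = localEnergy G + localEnergy H := by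
  unfold localEnergy
  rw [Fintype.sum_sum_type]
  congr 1 <;> refine Finset.sum_congr rfl fun v _ => ?_
  · unfold localEnergyAt
    rw [graphEnergy_iso (deleteInl G H v), graphEnergy_sum, graphEnergy_sum]
    ring
  · unfold localEnergyAt
    rw [graphEnergy_iso (deleteInr G H v), graphEnergy_sum, graphEnergy_sum]
    ring

lemma eigenvalue_top {V : Type*} [Fintype V] [DecidableEq V]
    [DecidableRel (⊤ : SimpleGraph V).Adj] (i : V) :
    (adjMatrix_isHermitian (⊤ : SimpleGraph V)).eigenvalues i = -1 ∨
    (adjMatrix_isHermitian (⊤ : SimpleGraph V)).eigenvalues i = Fintype.card V - 1 := by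
  set hA := adjMatrix_isHermitian (⊤ : SimpleGraph V)
  have h := hA.mulVec_eigenvectorBasis i
  have hne : (hA.eigenvectorBasis i).ofLp ≠ 0 := by
    intro h0
    have := hA.eigenvectorBasis.orthonormal.ne_zero i
    apply this
    ext j
    exact congrFun h0 j
  generalize hA.eigenvalues i = l at *
  generalize (hA.eigenvectorBasis i).ofLp = x at *
  have hx : ∀ j, ∑ k, x k = (l + 1) * x j := by
    intro j
    have hj := congrFun h j
    simp only [Matrix.mulVec, dotProduct, SimpleGraph.adjMatrix_apply, SimpleGraph.top_adj,
      Pi.smul_apply, smul_eq_mul, ite_mul, one_mul, zero_mul] at hj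
    have h2 : ∑ k, x k = ∑ k, (if j ≠ k then x k else 0) + ∑ k, (if j = k then x k else 0) := by
      rw [← Finset.sum_add_distrib]
      refine Finset.sum_congr rfl fun k _ => ?_
      by_cases hk : j = k <;> simp [hk]
    rw [h2, Finset.sum_ite_eq]
    simp only [Finset.mem_univ, if_true]
    have h3 : ∑ k, (if j ≠ k then x k else 0) = l * x j := by
      rw [← hj]
    rw [h3]; ring
  by_cases hl : l = -1
  · exact Or.inl hl
  · right
    have hl' : l + 1 ≠ 0 := fun h0 => hl (by linarith)
    have hs : ∑ k, x k ≠ 0 := by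
      intro hs
      apply hne
      ext j
      have := hx j
      rw [hs] at this
      rcases mul_eq_zero.mp this.symm with h0 | h0
      · exact absurd h0 hl'
      · exact h0
    have h4 : (Fintype.card V : ℝ) * ∑ k, x k = (l + 1) * ∑ k, x k := by
      rw [Finset.mul_sum (a := l + 1)]
      rw [← Finset.sum_congr rfl fun j _ => hx j]
      simp
    have := mul_right_cancel₀ hs h4
    linarith

lemma graphEnergy_top {V : Type*} [Fintype V] [DecidableEq V] [Nonempty V] :
    graphEnergy (⊤ : SimpleGraph V) = 2 * (Fintype.card V : ℝ) - 2 := by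
  classical
  have hn : (0 : ℝ) < Fintype.card V := by exact_mod_cast Fintype.card_pos
  have hn1 : (1 : ℝ) ≤ Fintype.card V := by exact_mod_cast Fintype.card_pos
  let _ := Classical.decRel (⊤ : SimpleGraph V).Adj
  have ht := (adjMatrix_isHermitian (⊤ : SimpleGraph V)).trace_eq_sum_eigenvalues
  rw [SimpleGraph.trace_adjMatrix] at ht
  simp only [RCLike.ofReal_real_eq_id, id] at ht
  have key : ∀ i, |(adjMatrix_isHermitian (⊤ : SimpleGraph V)).eigenvalues i| =
      ((Fintype.card V - 2) / Fintype.card V : ℝ) *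
        (adjMatrix_isHermitian (⊤ : SimpleGraph V)).eigenvalues i +
      (2 * Fintype.card V - 2) / Fintype.card V := by
    intro i
    rcases eigenvalue_top i with h | h <;> rw [h]
    · rw [abs_neg, abs_one]; field_simp; ring
    · rw [abs_of_nonneg (by linarith)]; field_simp; ring
  unfold graphEnergy
  rw [Finset.sum_congr rfl fun i _ => key i, Finset.sum_add_distrib, ← Finset.mul_sum, ← ht]
  simp only [mul_zero, Finset.sum_const, Finset.card_univ, nsmul_eq_mul, zero_add]
  field_simp

lemma card_delete (n : ℕ) (v : Fin (n + 2)) :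
    Fintype.card ({u | u ≠ v} : Set (Fin (n + 2))) = n + 1 := by
  rw [Fintype.card_ofFinset]
  have : (Finset.univ.filter (fun u => u ≠ v)) = Finset.univ.erase v := by
    ext; simp
  simp [this, Finset.card_erase_of_mem]

lemma localEnergy_top (n : ℕ) :
    localEnergy (⊤ : SimpleGraph (Fin (n + 2))) = 2 * (n + 2) := by
  have : ∀ v : Fin (n + 2), localEnergyAt (⊤ : SimpleGraph (Fin (n + 2))) v = 2 := by
    intro v
    unfold localEnergyAt
    have h : (⊤ : SimpleGraph (Fin (n + 2))).induce {u | u ≠ v} = ⊤ := by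
      ext a b
      simp [Subtype.ext_iff]
    have : Nonempty ({u | u ≠ v} : Set (Fin (n + 2))) := by
      obtain ⟨w, hw⟩ := exists_ne v
      exact ⟨⟨w, hw⟩⟩
    rw [h, graphEnergy_top, graphEnergy_top]
    have hc : Fintype.card ({u | u ≠ v} : Set (Fin (n + 2))) = n + 1 := by
      exact (card_delete n v)
    rw [hc]
    simp
    ring
  unfold localEnergy
  simp [this]
  ring

/-- The graph obtained from `cycleGraph (n+2)` by deleting a vertex is a path. -/
lemma graphEnergy_cycle_delete (n : ℕ) (v : Fin (n + 2)) (f : Fin (n + 1) → Fin (n + 2))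
    (hf : Function.Injective f) (hv : ∀ i, f i ≠ v)
    (h : ∀ i j, (cycleGraph (n + 2)).Adj (f i) (f j) ↔ (pathGraph (n + 1)).Adj i j) :
    graphEnergy ((cycleGraph (n + 2)).induce {u | u ≠ v}) = graphEnergy (pathGraph (n + 1)) := by
  let g : Fin (n + 1) → ({u | u ≠ v} : Set (Fin (n + 2))) := fun i => ⟨f i, hv i⟩
  have hg : Function.Bijective g := by
    rw [Fintype.bijective_iff_injective_and_card]
    refine ⟨fun i j hij => hf (congrArg Subtype.val hij), ?_⟩
    rw [card_delete, Fintype.card_fin]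
  symm
  refine graphEnergy_iso ⟨Equiv.ofBijective g hg, ?_⟩
  intro i j
  exact h i j

instance pathDec (n : ℕ) : DecidableRel (pathGraph n).Adj :=
  fun _ _ => decidable_of_iff _ pathGraph_adj.symm

open Polynomial in
lemma charpoly_P4 : ((pathGraph 4).adjMatrix ℝ).charpoly =
    (X ^ 2 + X - 1) * (X ^ 2 + X - 1 : ℝ[X]).comp (-X) := by
  have : (pathGraph 4).adjMatrix ℝ = !![0,1,0,0; 1,0,1,0; 0,1,0,1; 0,0,1,0] := by
    ext i j
    fin_cases i <;> fin_cases j <;> simp [SimpleGraph.adjMatrix_apply, pathGraph_adj]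
  rw [this]
  simp [Matrix.charpoly, Matrix.charmatrix, Matrix.det_succ_row_zero, Fin.sum_univ_succ,
    Fin.succAbove, Matrix.diagonal_apply]
  ring

open Polynomial in
lemma charpoly_C5 : ((cycleGraph 5).adjMatrix ℝ).charpoly =
    (X - C 2) * ((X ^ 2 + X - 1) * (X ^ 2 + X - 1 : ℝ[X])) := by
  have : (cycleGraph 5).adjMatrix ℝ =
      !![0,1,0,0,1; 1,0,1,0,0; 0,1,0,1,0; 0,0,1,0,1; 1,0,0,1,0] := by
    ext i j
    fin_cases i <;> fin_cases j <;> simp [SimpleGraph.adjMatrix_apply, cycleGraph_adj] <;> decide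
  rw [this, map_ofNat C 2]
  simp [Matrix.charpoly, Matrix.charmatrix, Matrix.det_succ_row_zero, Fin.sum_univ_succ,
    Fin.succAbove, Matrix.diagonal_apply]
  ring

set_option maxHeartbeats 4000000 in
open Polynomial in
lemma charpoly_P6 : ((pathGraph 6).adjMatrix ℝ).charpoly =
    (X ^ 3 + X ^ 2 - 2 * X - 1) * (-((X ^ 3 + X ^ 2 - 2 * X - 1 : ℝ[X]).comp (-X))) := by
  have : (pathGraph 6).adjMatrix ℝ = 
      !![0,1,0,0,0,0; 1,0,1,0,0,0; 0,1,0,1,0,0; 0,0,1,0,1,0; 0,0,0,1,0,1; 0,0,0,0,1,0] := by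
    ext i j
    fin_cases i <;> fin_cases j <;> simp [SimpleGraph.adjMatrix_apply, pathGraph_adj]
  rw [this]
  simp [Matrix.charpoly, Matrix.charmatrix, Matrix.det_succ_row_zero, Fin.sum_univ_succ,
    Fin.succAbove, Matrix.diagonal_apply]
  ring

set_option maxHeartbeats 4000000 in
open Polynomial in
lemma charpoly_C7 : ((cycleGraph 7).adjMatrix ℝ).charpoly =
    (X - C 2) * ((X ^ 3 + X ^ 2 - 2 * X - 1) * (X ^ 3 + X ^ 2 - 2 * X - 1 : ℝ[X])) := by
  have : (cycleGraph 7).adjMatrix ℝ =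
      !![0,1,0,0,0,0,1; 1,0,1,0,0,0,0; 0,1,0,1,0,0,0; 0,0,1,0,1,0,0; 0,0,0,1,0,1,0; 0,0,0,0,1,0,1; 1,0,0,0,0,1,0] := by
    ext i j
    fin_cases i <;> fin_cases j <;> simp [SimpleGraph.adjMatrix_apply, cycleGraph_adj] <;> decide
  rw [this, map_ofNat C 2]
  simp [Matrix.charpoly, Matrix.charmatrix, Matrix.det_succ_row_zero, Fin.sum_univ_succ,
    Fin.succAbove, Matrix.diagonal_apply]
  ring

open Polynomial in
lemma monic_two : (X ^ 2 + X - 1 : ℝ[X]).Monic := by monicity!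

open Polynomial in
lemma monic_three : (X ^ 3 + X ^ 2 - 2 * X - 1 : ℝ[X]).Monic := by
  rw [← map_ofNat C 2]; monicity!

open Polynomial in
lemma absRoots_X_sub_two : absRoots (X - C 2) = 2 := by
  simp [absRoots]

open Polynomial in
lemma energy_C5 : graphEnergy (cycleGraph 5) = 2 + graphEnergy (pathGraph 4) := by
  rw [graphEnergy_eq, graphEnergy_eq, charpoly_C5, charpoly_P4,
    absRoots_mul (monic_X_sub_C _) (monic_two.mul monic_two), absRoots_mul monic_two monic_two,
    absRoots_mul monic_two, absRoots_comp, absRoots_X_sub_two]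
  have := monic_two.neg_one_pow_natDegree_mul_comp_neg_X
  rwa [show (X ^ 2 + X - 1 : ℝ[X]).natDegree = 2 by compute_degree!, neg_one_sq, one_mul] at this

open Polynomial in
lemma energy_C7 : graphEnergy (cycleGraph 7) = 2 + graphEnergy (pathGraph 6) := by
  rw [graphEnergy_eq, graphEnergy_eq, charpoly_C7, charpoly_P6,
    absRoots_mul (monic_X_sub_C _) (monic_three.mul monic_three),
    absRoots_mul monic_three monic_three,
    absRoots_mul monic_three, absRoots_neg_comp, absRoots_X_sub_two]
  have := monic_three.neg_one_pow_natDegree_mul_comp_neg_X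
  have hd : (X ^ 3 + X ^ 2 - 2 * X - 1 : ℝ[X]).natDegree = 3 := by
    rw [← map_ofNat C 2]; compute_degree!
  rwa [hd, show (-1 : ℝ[X]) ^ 3 = -1 by norm_num, neg_one_mul] at this

lemma localEnergy_C5 : localEnergy (cycleGraph 5) = 10 := by
  have : ∀ v : Fin 5, localEnergyAt (cycleGraph 5) v = 2 := by
    intro v
    unfold localEnergyAt
    rw [graphEnergy_cycle_delete 3 v (fun i => v + 1 + i.castSucc), energy_C5]
    · ring
    · revert v; decide
    · revert v; decide
    · intro i j
      rw [pathGraph_adj]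
      revert v i j; decide
  unfold localEnergy
  simp [this]
  norm_num

lemma localEnergy_C7 : localEnergy (cycleGraph 7) = 14 := by
  have : ∀ v : Fin 7, localEnergyAt (cycleGraph 7) v = 2 := by
    intro v
    unfold localEnergyAt
    rw [graphEnergy_cycle_delete 5 v (fun i => v + 1 + i.castSucc), energy_C7]
    · ring
    · revert v; decide
    · revert v; decide
    · intro i j
      rw [pathGraph_adj]
      revert v i j; decide
  unfold localEnergy
  simp [this]
  norm_num

/-- `e(K₇) = e(K₅ ∪ K₂) = e(K₄ ∪ K₃) = e(K₃ ∪ K₂ ∪ K₂) = e(C₇) = e(C₅ ∪ K₂)`. -/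
theorem localEnergy_K7_eq :
    localEnergy (⊤ : SimpleGraph (Fin 7)) =
      localEnergy ((⊤ : SimpleGraph (Fin 5)) ⊕g (⊤ : SimpleGraph (Fin 2))) ∧
    localEnergy ((⊤ : SimpleGraph (Fin 5)) ⊕g (⊤ : SimpleGraph (Fin 2))) =
      localEnergy ((⊤ : SimpleGraph (Fin 4)) ⊕g (⊤ : SimpleGraph (Fin 3))) ∧
    localEnergy ((⊤ : SimpleGraph (Fin 4)) ⊕g (⊤ : SimpleGraph (Fin 3))) =
      localEnergy (((⊤ : SimpleGraph (Fin 3)) ⊕g (⊤ : SimpleGraph (Fin 2)))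
        ⊕g (⊤ : SimpleGraph (Fin 2))) ∧
    localEnergy (((⊤ : SimpleGraph (Fin 3)) ⊕g (⊤ : SimpleGraph (Fin 2)))
        ⊕g (⊤ : SimpleGraph (Fin 2))) =
      localEnergy (cycleGraph 7) ∧
    localEnergy (cycleGraph 7) =
      localEnergy (cycleGraph 5 ⊕g (⊤ : SimpleGraph (Fin 2))) := by
  have h7 := localEnergy_top 5
  have h5 := localEnergy_top 3
  have h4 := localEnergy_top 2
  have h3 := localEnergy_top 1
  have h2 := localEnergy_top 0
  norm_num at h7 h5 h4 h3 h2
  simp only [localEnergy_sum, localEnergy_C5, localEnergy_C7, h7, h5, h4, h3, h2]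
  norm_num
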